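/- Let T be a compactly generated triangulated category and S a full triangulated subcategory of T that is closed under coproducts and contains a set of compact generators of T. Then S = T. -/

import Mathlib

/-!
Statement 5 (Neeman, dévissage): if `S` is a full triangulated subcategory of a
compactly generated triangulated category `T` that is closed under coproducts and
contains a set of compact generators of `T`, then `S = T`.
-/

namespace LadderFormalization

open CategoryTheory Category Limits Pretriangulated Opposite

universe v u

variable {T : Type u} [Category.{v} T] [HasZeroObject T] [HasShift T ℤ] [Preadditive T]
  [∀ n : ℤ, (shiftFunctor T n).Additive] [Pretriangulated T]

/-- An object `X` is compact if `Hom(X, -)` (as a functor to abelian groups) preserves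
all small coproducts. -/
def IsCompactObj (X : T) : Prop :=
  ∀ J : Type v, PreservesColimitsOfShape (Discrete J) (preadditiveCoyoneda.obj (op X))

/-- A set of objects of a pretriangulated category is a (strictly full) triangulated
subcategory. -/
structure IsTriangulatedSub (S : Set T) : Prop where
  iso_mem : ∀ ⦃X Y : T⦄, (X ≅ Y) → X ∈ S → Y ∈ S
  zero_mem : ∀ ⦃Z : T⦄, IsZero Z → Z ∈ S
  shift_mem : ∀ (n : ℤ) ⦃X : T⦄, X ∈ S → X⟦n⟧ ∈ S
  ext_mem : ∀ (Tr : Triangle T), Tr ∈ (distTriang T) → Tr.obj₁ ∈ S → Tr.obj₃ ∈ S →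
    Tr.obj₂ ∈ S

/-- A class of objects is closed under (small) coproducts. -/
def CoproductClosed (S : Set T) : Prop :=
  ∀ (J : Type v) (f : J → T), (∀ j, f j ∈ S) →
    ∀ (c : Cofan f), IsColimit c → c.pt ∈ S

/-!
Let `Y : T`. Start from a coproduct of shifted generators through which every map from a shifted
generator to `Y` factors, and repeatedly pass to a cone that kills the maps from shifted
generators which vanish in `Y`. This gives a sequence over `Y` inside `S`. As countably compact
objects see a homotopy colimit as a filtered colimit, the homotopy colimit of the sequence has the
same maps from shifted generators as `Y`. The cone of the comparison map is then orthogonal to the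
generators, hence zero, so `Y` is isomorphic to an object of `S`.
-/

section Compactness

lemma iSup_range_hom_ι_eq_top {J : Type*} [Category* J] {F : J ⥤ AddCommGrpCat.{v}} {c : Cocone F}
    (hc : IsColimit c) : ⨆ j, AddMonoidHom.range (N := c.pt) (c.ι.app j).hom = ⊤ := by
  set H : AddSubgroup c.pt := ⨆ j, AddMonoidHom.range (N := c.pt) (c.ι.app j).hom
  have mk_eq_zero : AddCommGrpCat.ofHom (QuotientAddGroup.mk' H) = 0 := hc.hom_ext fun j => by
    ext x
    have : (c.ι.app j).hom x ∈ H := AddSubgroup.mem_iSup_of_mem j ⟨x, rfl⟩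
    exact (QuotientAddGroup.eq_zero_iff _).2 this
  refine eq_top_iff.2 fun x _ => (QuotientAddGroup.eq_zero_iff x).1 ?_
  exact congrArg (fun f => f.hom x) mk_eq_zero

variable {C : Type*} [Category.{v} C] [Preadditive C]

lemma iSup_range_rightComp_ι_eq_top {J : Type*} (F : J → C) [HasCoproduct F] (P : C)
    [PreservesColimitsOfShape (Discrete J) (preadditiveCoyoneda.obj (op P))] :
    ⨆ j, (Preadditive.rightComp P (Sigma.ι F j)).range = ⊤ := by
  have h := iSup_range_hom_ι_eq_top
    (isColimitOfPreserves (preadditiveCoyoneda.obj (op P)) (coproductIsCoproduct F))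
  rw [← discreteEquiv.symm.iSup_comp] at h
  exact h

lemma eq_zero_of_comp_π_eq_zero {J : Type*} [DecidableEq J] {F : J → C} [HasCoproduct F] {P : C}
    [PreservesColimitsOfShape (Discrete J) (preadditiveCoyoneda.obj (op P))]
    {g : P ⟶ ∐ F} (hg : ∀ j, g ≫ Sigma.π F j = 0) : g = 0 := by
  let toSum : (DirectSum J fun j => P ⟶ F j) →+ (P ⟶ ∐ F) :=
    DirectSum.toAddMonoid fun j => Preadditive.rightComp P (Sigma.ι F j)
  have toSum_π (d j) : toSum d ≫ Sigma.π F j = d j := by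
    induction d using DirectSum.induction_on with
    | zero => simp
    | of i h =>
      by_cases hij : i = j
      · subst hij; simp [toSum, Preadditive.rightComp]
      · simp [toSum, Preadditive.rightComp, DirectSum.of_eq_of_ne _ _ _ (Ne.symm hij),
          Sigma.ι_π_of_ne _ hij]
    | add d e hd he => simp [Preadditive.add_comp, hd, he]
  have toSum_surjective : Function.Surjective toSum := by
    rw [← AddMonoidHom.range_eq_top, eq_top_iff, ← iSup_range_rightComp_ι_eq_top F P, iSup_le_iff]
    rintro j _ ⟨h, rfl⟩
    exact ⟨DirectSum.of _ j h, by simp [toSum]⟩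
  obtain ⟨d, rfl⟩ := toSum_surjective g
  have d_eq_zero : d = 0 := DFinsupp.ext fun j => by rw [← toSum_π, hg]; rfl
  rw [d_eq_zero, map_zero]

/-- Objects `P` such that `Hom(P, -)` commutes with countable coproducts. Only this much of
compactness is needed to compute maps into sequential homotopy colimits. -/
def countablyCompact : ObjectProperty C := fun P =>
  PreservesColimitsOfShape (Discrete ℕ) (preadditiveCoyoneda.obj (op P))

lemma IsCompactObj.countablyCompact {P : C} (hP : IsCompactObj P) : countablyCompact P :=
  have := hP (ULift ℕ)
  preservesColimitsOfShape_of_equiv (Discrete.equivalence Equiv.ulift) _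

instance : (countablyCompact (C := C)).IsClosedUnderIsomorphisms where
  of_iso e h :=
    have : PreservesColimitsOfShape _ _ := h
    preservesColimitsOfShape_of_natIso (preadditiveCoyoneda.mapIso e.symm.op)

lemma countablyCompact.obj_of_adjunction {D : Type*} [Category.{v} D] [Preadditive D]
    {F : C ⥤ D} {G : D ⥤ C} (adj : F ⊣ G) [F.Additive]
    [PreservesColimitsOfShape (Discrete ℕ) G] {P : C} (hP : countablyCompact P) :
    countablyCompact (F.obj P) := by
  have : PreservesColimitsOfShape _ _ := hP
  let e : G ⋙ preadditiveCoyoneda.obj (op P) ≅ preadditiveCoyoneda.obj (op (F.obj P)) :=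
    NatIso.ofComponents (fun X => (adj.homAddEquiv P X).symm.toAddCommGrpIso) fun f => by
      ext g
      exact adj.homEquiv_naturality_right_symm g f
  exact preservesColimitsOfShape_of_natIso e

instance [HasShift C ℤ] [∀ n : ℤ, (shiftFunctor C n).Additive] :
    (countablyCompact (C := C)).IsStableUnderShift ℤ where
  isStableUnderShiftBy n := ⟨fun _ hP =>
    hP.obj_of_adjunction (F := shiftFunctor C n) (shiftEquiv C n).toAdjunction⟩

end Compactness

section Telescope

variable {C : Type*} [Category.{v} C]

/-- The shift map of the telescope of `X`, sending the summand `X n` to the summand `X (n + 1)`.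
The cone of `𝟙 - telescopeShift X` is the homotopy colimit of the sequence `X`. -/
noncomputable def telescopeShift (X : ℕ ⥤ C) [HasCoproduct X.obj] : ∐ X.obj ⟶ ∐ X.obj :=
  Sigma.desc fun n => X.map (homOfLE n.le_succ) ≫ Sigma.ι X.obj (n + 1)

variable (X : ℕ ⥤ C) [HasCoproduct X.obj]

lemma ι_telescopeShift_assoc (n : ℕ) {Y : C} (f : ∐ X.obj ⟶ Y) :
    Sigma.ι X.obj n ≫ telescopeShift X ≫ f =
      X.map (homOfLE n.le_succ) ≫ Sigma.ι X.obj (n + 1) ≫ f := by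
  simp [telescopeShift]

variable [Preadditive C]

lemma telescopeShift_π_zero : telescopeShift X ≫ Sigma.π X.obj 0 = 0 := by
  ext n
  simp [ι_telescopeShift_assoc, Sigma.ι_π_of_ne]

lemma telescopeShift_π_succ (m : ℕ) :
    telescopeShift X ≫ Sigma.π X.obj (m + 1) =
      Sigma.π X.obj m ≫ X.map (homOfLE m.le_succ) := by
  ext n
  by_cases h : n = m
  · subst h; simp [ι_telescopeShift_assoc]
  · simp [ι_telescopeShift_assoc, Sigma.ι_π_of_ne, Sigma.ι_π_of_ne_assoc, h]

lemma countablyCompact.eq_zero_of_comp_id_sub_telescopeShift {P : C} (hP : countablyCompact P)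
    {g : P ⟶ ∐ X.obj} (hg : g ≫ (𝟙 _ - telescopeShift X) = 0) : g = 0 := by
  have : PreservesColimitsOfShape _ _ := hP
  have g_fixed : g = g ≫ telescopeShift X := by
    rwa [Preadditive.comp_sub, comp_id, sub_eq_zero] at hg
  refine eq_zero_of_comp_π_eq_zero fun n => ?_
  induction n with
  | zero => rw [g_fixed, assoc, telescopeShift_π_zero, comp_zero]
  | succ n ih => rw [g_fixed, assoc, telescopeShift_π_succ, ← assoc, ih, zero_comp]

end Telescope

lemma eq_zero_of_comp_shift_map_eq_zero {C : Type*} [Category* C] [Preadditive C] [HasShift C ℤ]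
    [∀ n : ℤ, (shiftFunctor C n).Additive] (n : ℤ) {P A B : C} {f : A ⟶ B}
    (hf : ∀ g : P⟦-n⟧ ⟶ A, g ≫ f = 0 → g = 0) {g : P ⟶ A⟦n⟧} (hg : g ≫ f⟦n⟧' = 0) : g = 0 := by
  let adj : shiftFunctor C (-n) ⊣ shiftFunctor C n :=
    (shiftEquiv' C (-n) n (by simp)).toAdjunction
  rw [← (adj.homAddEquiv P A).symm.map_eq_zero_iff]
  refine hf _ ?_
  rw [Adjunction.homAddEquiv_symm_apply, ← adj.homEquiv_naturality_right_symm, hg]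
  exact map_zero (adj.homAddEquiv P B).symm

section HomotopyColimit

variable {X : ℕ ⥤ T} [HasCoproduct X.obj]

/-- The cocone `c` exhibits its point as a homotopy colimit of the sequence `X`, i.e. as a cone of
`𝟙 - telescopeShift X`. -/
def IsHomotopyColimit (c : Cocone X) : Prop :=
  ∃ w : c.pt ⟶ (∐ X.obj)⟦(1 : ℤ)⟧,
    Triangle.mk (𝟙 _ - telescopeShift X) (Sigma.desc c.ι.app) w ∈ distTriang T

lemma exists_isHomotopyColimit (S : ObjectProperty T) [S.IsTriangulatedClosed₃]
    [S.IsClosedUnderColimitsOfShape (Discrete ℕ)] (hX : ∀ n, S (X.obj n)) :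
    ∃ c : Cocone X, S c.pt ∧ IsHomotopyColimit c := by
  have hS : S (∐ X.obj) := S.prop_colimit _ fun n => hX n.as
  obtain ⟨Z, hZ, u, w, hT⟩ := S.distinguished_cocone_triangle (𝟙 _ - telescopeShift X) hS hS
  have telescopeShift_u : telescopeShift X ≫ u = u := by
    have h : (𝟙 _ - telescopeShift X) ≫ u = 0 := comp_distTriang_mor_zero₁₂ _ hT
    rwa [Preadditive.sub_comp, id_comp, sub_eq_zero, eq_comm] at h
  let c : Cocone X := ⟨Z, NatTrans.ofSequence (fun n => Sigma.ι X.obj n ≫ u) fun n => by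
    simp [← ι_telescopeShift_assoc, telescopeShift_u]⟩
  have desc_eq : Sigma.desc c.ι.app = u := by
    ext n
    simp [c]
  exact ⟨c, hZ, w, desc_eq ▸ hT⟩

lemma IsHomotopyColimit.exists_desc {c : Cocone X} (hc : IsHomotopyColimit c) (d : Cocone X) :
    ∃ f : c.pt ⟶ d.pt, ∀ n, c.ι.app n ≫ f = d.ι.app n := by
  obtain ⟨w, hT⟩ := hc
  have h : (𝟙 _ - telescopeShift X) ≫ Sigma.desc d.ι.app = 0 := by
    ext n
    simp [Preadditive.sub_comp, ι_telescopeShift_assoc]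
  obtain ⟨f, hf⟩ : ∃ f, Sigma.desc d.ι.app = Sigma.desc c.ι.app ≫ f :=
    Triangle.yoneda_exact₂ _ hT _ h
  exact ⟨f, fun n => by rw [← Sigma.ι_desc d.ι.app n, hf, Sigma.ι_desc_assoc]⟩

lemma IsHomotopyColimit.exists_comp_desc_eq {c : Cocone X} (hc : IsHomotopyColimit c)
    {P : T} (hP : countablyCompact P) (g : P ⟶ c.pt) :
    ∃ g' : P ⟶ ∐ X.obj, g' ≫ Sigma.desc c.ι.app = g := by
  obtain ⟨w, hT⟩ := hc
  have w_map : w ≫ (𝟙 _ - telescopeShift X)⟦(1 : ℤ)⟧' = 0 := comp_distTriang_mor_zero₃₁ _ hT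
  have g_w : g ≫ w = 0 := by
    refine eq_zero_of_comp_shift_map_eq_zero 1
      (fun k => (countablyCompact.le_shift (-1) P hP).eq_zero_of_comp_id_sub_telescopeShift X) ?_
    rw [assoc, w_map, comp_zero]
  obtain ⟨g', hg'⟩ := Triangle.coyoneda_exact₃ _ hT g g_w
  exact ⟨g', hg'.symm⟩

lemma IsHomotopyColimit.exists_comp_ι_eq {c : Cocone X} (hc : IsHomotopyColimit c)
    {P : T} (hP : countablyCompact P) (g : P ⟶ c.pt) :
    ∃ (n : ℕ) (g' : P ⟶ X.obj n), g' ≫ c.ι.app n = g := by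
  have : PreservesColimitsOfShape _ _ := hP
  let R (n : ℕ) : AddSubgroup (P ⟶ c.pt) := (Preadditive.rightComp P (c.ι.app n)).range
  have R_mono : Monotone R := by
    rintro n m hnm _ ⟨h, rfl⟩
    refine ⟨h ≫ X.map (homOfLE hnm), ?_⟩
    simp [Preadditive.rightComp]
  have iSup_R : ⨆ n, R n = (Preadditive.rightComp P (Sigma.desc c.ι.app)).range := by
    rw [AddMonoidHom.range_eq_map, ← iSup_range_rightComp_ι_eq_top X.obj P, AddSubgroup.map_iSup]
    refine iSup_congr fun n => ?_
    rw [AddMonoidHom.map_range]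
    ext g
    simp [R, Preadditive.rightComp]
  obtain ⟨g', rfl⟩ := hc.exists_comp_desc_eq hP g
  exact (AddSubgroup.mem_iSup_of_directed R_mono.directed_le).1 (iSup_R ▸ ⟨g', rfl⟩)

lemma IsHomotopyColimit.isColocal {Q : ObjectProperty T} (hQ : Q ≤ countablyCompact)
    {c d : Cocone X} (hc : IsHomotopyColimit c) {f : c.pt ⟶ d.pt}
    (hf : ∀ n, c.ι.app n ≫ f = d.ι.app n)
    (h₀ : ∀ (P : T), Q P → ∀ g : P ⟶ d.pt, ∃ g' : P ⟶ X.obj 0, g' ≫ d.ι.app 0 = g)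
    (hker : ∀ (P : T), Q P → ∀ (n : ℕ) (g : P ⟶ X.obj n), g ≫ d.ι.app n = 0 →
      g ≫ X.map (homOfLE n.le_succ) = 0) :
    Q.isColocal f := by
  refine fun P hP => ⟨?_, fun g => ?_⟩
  · refine (injective_iff_map_eq_zero (Preadditive.rightComp P f)).2 fun g (hg : g ≫ f = 0) => ?_
    obtain ⟨n, g, rfl⟩ := hc.exists_comp_ι_eq (hQ P hP) g
    rw [assoc, hf] at hg
    rw [← c.w (homOfLE n.le_succ), ← assoc, hker P hP n g hg, zero_comp]
  · obtain ⟨g', rfl⟩ := h₀ P hP g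
    exact ⟨g' ≫ c.ι.app 0, by simp [hf]⟩

end HomotopyColimit

section Colocalization

lemma rightOrthogonal_obj₃_of_isColocal {Q : ObjectProperty T} [Q.IsStableUnderShift ℤ]
    {Tr : Triangle T} (hTr : Tr ∈ distTriang T) (h : Q.isColocal Tr.mor₁) :
    Q.rightOrthogonal Tr.obj₃ := by
  intro P g hP
  have g_mor₃ : g ≫ Tr.mor₃ = 0 := by
    refine eq_zero_of_comp_shift_map_eq_zero 1 (f := Tr.mor₁) (fun k hk => ?_) ?_
    · exact (h _ (Q.le_shift (-1) P hP)).injective (by simpa using hk)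
    · rw [assoc, comp_distTriang_mor_zero₃₁ _ hTr, comp_zero]
  obtain ⟨k, rfl⟩ := Triangle.coyoneda_exact₃ _ hTr g g_mor₃
  obtain ⟨l, rfl⟩ := (h P hP).surjective k
  rw [assoc, comp_distTriang_mor_zero₁₂ _ hTr, comp_zero]

lemma exists_precover {C : Type*} [Category.{v} C] [HasCoproducts.{v} C]
    (Q S : ObjectProperty C) [ObjectProperty.EssentiallySmall.{v} Q]
    [∀ J : Type v, S.IsClosedUnderColimitsOfShape (Discrete J)] (hQS : Q ≤ S) (Y : C) :
    ∃ (X : C) (p : X ⟶ Y), S X ∧ ∀ (P : C), Q P → ∀ g : P ⟶ Y, ∃ g' : P ⟶ X, g' ≫ p = g := by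
  obtain ⟨Q₀, _, hQ₀, hQQ₀⟩ := ObjectProperty.EssentiallySmall.exists_small_le.{v} Q
  let e := equivShrink.{v} (Subtype Q₀)
  let F : (Σ i : Shrink.{v} (Subtype Q₀), (e.symm i).1 ⟶ Y) → C := fun j => (e.symm j.1).1
  refine ⟨∐ F, Sigma.desc Sigma.snd, S.prop_colimit _ fun j => hQS _ (hQ₀ _ (e.symm _).2), ?_⟩
  intro P hP g
  obtain ⟨P₀, hP₀, ⟨i⟩⟩ := hQQ₀ P hP
  obtain ⟨j, hj⟩ := e.symm.surjective ⟨P₀, hP₀⟩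
  obtain rfl : (e.symm j).1 = P₀ := congrArg Subtype.val hj
  exact ⟨i.hom ≫ Sigma.ι F ⟨j, i.inv ≫ g⟩, by simp⟩

variable [HasCoproducts.{v} T] (Q S : ObjectProperty T) [ObjectProperty.EssentiallySmall.{v} Q]
  [S.IsTriangulatedClosed₃] [∀ J : Type v, S.IsClosedUnderColimitsOfShape (Discrete J)]

lemma exists_over_hom_killing_kernel (hQS : Q ≤ S) {Y : T} (A : Over Y) (hA : S A.left) :
    ∃ (B : Over Y) (φ : A ⟶ B), S B.left ∧
      ∀ (P : T), Q P → ∀ g : P ⟶ A.left, g ≫ A.hom = 0 → g ≫ φ.left = 0 := by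
  obtain ⟨F, i, _, hF⟩ := distinguished_cocone_triangle₁ A.hom
  obtain ⟨K, p, hK, lift⟩ := exists_precover Q S hQS F
  obtain ⟨B, hB, φ, _, hT⟩ := S.distinguished_cocone_triangle (p ≫ i) hK hA
  have p_i_φ : (p ≫ i) ≫ φ = 0 := comp_distTriang_mor_zero₁₂ _ hT
  have i_hom : i ≫ A.hom = 0 := comp_distTriang_mor_zero₁₂ _ hF
  have p_i_hom : (p ≫ i) ≫ A.hom = 0 := by rw [assoc, i_hom, comp_zero]
  obtain ⟨q, hq⟩ : ∃ q, A.hom = φ ≫ q := Triangle.yoneda_exact₂ _ hT A.hom p_i_hom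
  refine ⟨Over.mk q, Over.homMk φ hq.symm, hB, fun P hP g hg => ?_⟩
  obtain ⟨g', rfl⟩ : ∃ g', g = g' ≫ i := Triangle.coyoneda_exact₂ _ hF g hg
  obtain ⟨g'', rfl⟩ := lift P hP g'
  simpa using congrArg (g'' ≫ ·) p_i_φ

lemma exists_over_sequence_killing_kernel (hQS : Q ≤ S) {Y : T} (A : Over Y) (hA : S A.left) :
    ∃ A' : ℕ ⥤ Over Y, A'.obj 0 = A ∧ (∀ n, S (A'.obj n).left) ∧
      ∀ (P : T), Q P → ∀ (n : ℕ) (g : P ⟶ (A'.obj n).left), g ≫ (A'.obj n).hom = 0 →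
        g ≫ (A'.map (homOfLE n.le_succ)).left = 0 := by
  have exists_next (B : {B : Over Y // S B.left}) := exists_over_hom_killing_kernel Q S hQS B.1 B.2
  choose next φ hnext hφ using exists_next
  let stage (n : ℕ) : {B : Over Y // S B.left} :=
    Nat.rec ⟨A, hA⟩ (fun _ B => ⟨next B, hnext B⟩) n
  refine ⟨Functor.ofSequence (X := fun n => (stage n).1) fun n => φ (stage n), rfl,
    fun n => (stage n).2, fun P hP n g hg => ?_⟩
  rw [Functor.ofSequence_map_homOfLE_succ]
  exact hφ (stage n) P hP g hg

theorem exists_isColocal (hQ : Q ≤ countablyCompact) (hQS : Q ≤ S) (Y : T) :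
    ∃ (Z : T) (f : Z ⟶ Y), S Z ∧ Q.isColocal f := by
  have : HasColimitsOfShape (Discrete ℕ) T :=
    hasColimitsOfShape_of_equivalence (Discrete.equivalence Equiv.ulift.{v})
  have : S.IsClosedUnderColimitsOfShape (Discrete ℕ) :=
    .of_equivalence (Discrete.equivalence Equiv.ulift.{v})
  obtain ⟨X₀, p, hX₀, lift⟩ := exists_precover Q S hQS Y
  obtain ⟨A, hA₀, hAS, hker⟩ := exists_over_sequence_killing_kernel Q S hQS (Over.mk p) hX₀
  let d : Cocone (A ⋙ Over.forget Y) := (Over.forgetCocone Y).whisker A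
  obtain ⟨c, hcS, hc⟩ := exists_isHomotopyColimit S (X := A ⋙ Over.forget Y) hAS
  obtain ⟨f, hf⟩ := hc.exists_desc d
  refine ⟨c.pt, f, hcS, hc.isColocal hQ (d := d) hf ?_ hker⟩
  change ∀ (P : T), Q P → ∀ g : P ⟶ Y, ∃ g' : P ⟶ (A.obj 0).left, g' ≫ (A.obj 0).hom = g
  rwa [hA₀]

end Colocalization

instance {C : Type*} [Category* C] [HasShift C ℤ] (P : ObjectProperty C)
    [ObjectProperty.EssentiallySmall.{v} P] :
    ObjectProperty.EssentiallySmall.{v} (P.shiftClosure ℤ) := by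
  have h : P.shiftClosure ℤ ≤ ⨆ n : ℤ, P.map (shiftFunctor C n) := by
    rintro X ⟨Y, n, e, hY⟩
    rw [ObjectProperty.prop_iSup_iff]
    exact ⟨n, Y, hY, ⟨e.symm⟩⟩
  exact .of_le h

lemma IsTriangulatedSub.cone_mem {S : Set T} (hS : IsTriangulatedSub S) {Tr : Triangle T}
    (hTr : Tr ∈ distTriang T) (h₁ : Tr.obj₁ ∈ S) (h₂ : Tr.obj₂ ∈ S) : Tr.obj₃ ∈ S :=
  hS.ext_mem _ (rot_of_distTriang _ hTr) h₂ (hS.shift_mem 1 h₁)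

lemma CoproductClosed.isClosedUnderColimitsOfShape {C : Type*} [Category.{v} C] {S : Set C}
    (hS : CoproductClosed S) (J : Type v) :
    ObjectProperty.IsClosedUnderColimitsOfShape (fun X => X ∈ S) (Discrete J) := by
  refine ⟨?_⟩
  rintro _ ⟨p⟩
  exact hS J (fun j => p.diag.obj ⟨j⟩) (fun j => p.prop_diag_obj ⟨j⟩)
    ((Cocone.precompose Discrete.natIsoFunctor.inv).obj p.cocone)
    ((IsColimit.precomposeInvEquiv _ _).symm p.isColimit)

lemma CoproductClosed.mem_of_iso {C : Type*} [Category.{v} C] {S : Set C}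
    (hS : CoproductClosed S) {X Y : C} (e : X ≅ Y) (hX : X ∈ S) : Y ∈ S :=
  hS PUnit (fun _ => X) (fun _ => hX) _ (Cofan.isColimitMkOfUnique e _)

theorem devissage_general [HasCoproducts.{v} T]
    {ι : Type*} [Small.{v} ι] (G : ι → T) (hGc : ∀ i, countablyCompact (G i))
    (hGgen : ∀ Y : T, (∀ (i : ι) (n : ℤ) (f : G i ⟶ Y⟦n⟧), f = 0) → IsZero Y)
    (S : Set T) (hScone : ∀ Tr ∈ distTriang T, Tr.obj₁ ∈ S → Tr.obj₂ ∈ S → Tr.obj₃ ∈ S)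
    (hScoprod : CoproductClosed S) (hGS : ∀ (i : ι) (n : ℤ), (G i)⟦n⟧ ∈ S) :
    S = Set.univ := by
  let Q := (ObjectProperty.ofObj G).shiftClosure ℤ
  let P : ObjectProperty T := fun X => X ∈ S
  have hQc : Q ≤ countablyCompact := by
    rw [ObjectProperty.shiftClosure_le_iff, ObjectProperty.ofObj_le_iff]
    exact hGc
  have hQS : Q ≤ P := by
    rintro _ ⟨_, n, e, ⟨i⟩⟩
    exact hScoprod.mem_of_iso e.symm (hGS i n)
  have : P.IsTriangulatedClosed₃ := ⟨fun Tr hTr h₁ h₂ => P.le_isoClosure _ (hScone Tr hTr h₁ h₂)⟩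
  have (J : Type v) : P.IsClosedUnderColimitsOfShape (Discrete J) :=
    hScoprod.isClosedUnderColimitsOfShape J
  refine Set.eq_univ_of_forall fun Y => ?_
  obtain ⟨Z, f, hZ, hf⟩ := exists_isColocal Q P hQc hQS Y
  obtain ⟨B, _, _, hT⟩ := distinguished_cocone_triangle f
  have hB : Q.rightOrthogonal B := rightOrthogonal_obj₃_of_isColocal hT hf
  have B_zero : IsZero B := hGgen B fun i n g =>
    Q.rightOrthogonal.le_shift n B hB g ((ObjectProperty.ofObj G).le_shiftClosure _ (.mk i))
  have : IsIso f := (Triangle.isZero₃_iff_isIso₁ _ hT).1 B_zero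
  exact hScoprod.mem_of_iso (asIso f) hZ

/-- a full coproduct-closed triangulated subcategory of a compactly
generated triangulated category containing a set of compact generators is the whole
category. -/
theorem devissage [HasCoproducts.{v} T]
    (ι : Type v) (G : ι → T) (hGc : ∀ i, IsCompactObj (G i))
    (hGgen : ∀ Y : T, (∀ (i : ι) (n : ℤ) (f : G i ⟶ Y⟦n⟧), f = 0) → IsZero Y)
    (S : Set T) (hS : IsTriangulatedSub S) (hScoprod : CoproductClosed S)
    (hGS : ∀ i, G i ∈ S) :
    S = Set.univ := by
  exact devissage_general G (fun i => (hGc i).countablyCompact) hGgen S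
    (fun _ hTr => hS.cone_mem hTr) hScoprod fun i n => hS.shift_mem n (hGS i)

end LadderFormalization
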